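/- Let S = x^32 - 3x^31 - 124x^30 + 651x^29 + 5797x^28 - 44020x^27 - 46593x^26 + 1523309x^25 - 4960682x^24 - 28562129x^23 + 205283395x^22 + 345367838x^21 - 3865963779x^20 - 5281917640x^19 + 35629245810x^18 + 95827452774x^17 + 227525150938x^16 - 1735983387875x^15 - 9952753525850x^14 + 15867354189588x^13 + 146446287180279x^12 - 99789981007214x^11 - 1135328992145553x^10 - 171825071648506x^9 + 7446294546204081x^8 + 294530833190147x^7 - 24397472702475140x^6 - 9976638213111902x^5 + 61714590456038129x^4 + 16902762581347117x^3 - 13833080015551423x^2 - 202960986205176103x + 187532019539254309 ∈ ℚ[x], which is irreducible, and let K = ℚ[x]/(S) be the number field it defines. The discriminant of K over ℚ equals -31^51. -/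

import Mathlib

open Polynomial

noncomputable def S : Polynomial ℚ :=
  X^32 - 3*X^31 - 124*X^30 + 651*X^29 + 5797*X^28 - 44020*X^27 - 46593*X^26 + 1523309*X^25 - 4960682*X^24 - 28562129*X^23 + 205283395*X^22 + 345367838*X^21 - 3865963779*X^20 - 5281917640*X^19 + 35629245810*X^18 + 95827452774*X^17 + 227525150938*X^16 - 1735983387875*X^15 - 9952753525850*X^14 + 15867354189588*X^13 + 146446287180279*X^12 - 99789981007214*X^11 - 1135328992145553*X^10 - 171825071648506*X^9 + 7446294546204081*X^8 + 294530833190147*X^7 - 24397472702475140*X^6 - 9976638213111902*X^5 + 61714590456038129*X^4 + 16902762581347117*X^3 - 13833080015551423*X^2 - 202960986205176103*X + 187532019539254309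

/-!
For an integral generator `θ` of a number field `K`, the discriminant of its minimal polynomial is
`[𝓞 K : ℤ[θ]] ^ 2 * disc K`. Here `disc S = -31 ^ 51 * I ^ 2`, and the index is exactly `I`:

* `I` divides the index, because `S` has a double root `c` modulo `I` with `I ^ 2 ∣ S(c)`. Then
  `S / (X - c)`, evaluated at `θ` and divided by `I`, is a root of a monic quadratic polynomial
  over `𝓞 K`, so it lies in `𝓞 K`; being monic in `θ` up to the factor `1 / I`, it has order
  divisible by `I` in `𝓞 K / ℤ[θ]`.
* The cofactor has square dividing `31 ^ 51`, and `31` does not divide the index by Dedekind's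
  criterion: modulo `31` the polynomial is `(X - 8) ^ 31 * (X - 3)`, while `S(8)` and `S(3)` are
  not divisible by `31 ^ 2`.
-/

section DoubleRoot

variable {A : Type*} [CommRing A] [IsDomain A] [IsIntegrallyClosed A]

theorem dvd_of_sq_eq_mul_add_sq_mul {m y a b : A} (h : y ^ 2 = m * b * y + m ^ 2 * a) : m ∣ y := by
  rcases eq_or_ne m 0 with rfl | hm
  · simpa using h
  have hm' : algebraMap A (FractionRing A) m ≠ 0 := by simpa using hm
  have hw : IsIntegral A (algebraMap A (FractionRing A) y / algebraMap A (FractionRing A) m) := by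
    refine ⟨X ^ 2 - C b * X - C a, by monicity!, ?_⟩
    have hF := congrArg (algebraMap A (FractionRing A)) h
    simp only [map_pow, map_add, map_mul] at hF
    simp only [eval₂_sub, eval₂_mul, eval₂_pow, eval₂_X, eval₂_C]
    field_simp
    linear_combination hF
  obtain ⟨z, hz⟩ := IsIntegrallyClosed.algebraMap_eq_of_integral hw
  refine ⟨z, IsFractionRing.injective A (FractionRing A) ?_⟩
  rw [map_mul, hz, mul_div_cancel₀ _ hm']

theorem dvd_aeval_divByMonic_X_sub_C {R : Type*} [CommRing R] [Algebra R A] {f : R[X]} {θ : A}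
    (hθ : aeval θ f = 0) {m c : R} (hf : m ^ 2 ∣ f.eval c) (hf' : m ∣ f.derivative.eval c) :
    algebraMap R A m ∣ aeval θ (f /ₘ (X - C c)) := by
  obtain ⟨a, ha⟩ := hf
  obtain ⟨b, hb⟩ := hf'
  have hdiv (g : R[X]) : C (g.eval c) + (X - C c) * (g /ₘ (X - C c)) = g := by
    rw [← modByMonic_X_sub_C_eq_C_eval, modByMonic_add_div]
  set h := f /ₘ (X - C c)
  have hhc : h.eval c = f.derivative.eval c := by
    conv_rhs => rw [← hdiv f]
    simp [h]
  have hfθ := congrArg (aeval θ) (hdiv f)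
  have hhθ := congrArg (aeval θ) (hdiv h)
  simp only [hhc, ha, hb, hθ, map_add, map_mul, map_sub, map_pow, aeval_C, aeval_X] at hfθ hhθ
  set r := aeval θ (h /ₘ (X - C c))
  apply dvd_of_sq_eq_mul_add_sq_mul (b := algebraMap R A b) (a := -(algebraMap R A a * r))
  linear_combination (-aeval θ h) * hhθ + r * hfθ

end DoubleRoot

theorem exists_eq_add_C_mul_of_map_eq {p : ℕ} {f g : ℤ[X]}
    (h : f.map (Int.castRingHom (ZMod p)) = g.map (Int.castRingHom (ZMod p))) :
    ∃ w : ℤ[X], f = g + C (p : ℤ) * w := by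
  have hdvd : C (p : ℤ) ∣ f - g := by
    refine (C_dvd_iff_dvd_coeff _ _).mpr fun i => ?_
    rw [← ZMod.intCast_zmod_eq_zero_iff_dvd, coeff_sub, Int.cast_sub, sub_eq_zero]
    simpa using congrArg (coeff · i) h
  obtain ⟨w, hw⟩ := hdvd
  exact ⟨w, by rw [← hw, add_sub_cancel]⟩

theorem exists_isRoot_divByMonic_eq_of_not_dvd {F : Type*} [Field F] {f g : F[X]}
    (hf : f.Splits) (hf0 : f ≠ 0) (hfg : ¬ f ∣ g) :
    ∃ x : F, f.IsRoot x ∧ ∃ u v, f /ₘ (X - C x) = u * f + v * g := by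
  classical
  obtain ⟨e, he⟩ := EuclideanDomain.gcd_dvd_left f g
  have he_unit : ¬ IsUnit e := fun hu =>
    hfg <| (he ▸ hu.mul_right_dvd.mpr dvd_rfl).trans (EuclideanDomain.gcd_dvd_right f g)
  have hef : e ∣ f := Dvd.intro_left _ he.symm
  obtain ⟨x, hx⟩ := (hf.of_dvd hf0 hef).exists_eval_eq_zero
    (fun h => he_unit (isUnit_iff_degree_eq_zero.mpr h))
  obtain ⟨e', he'⟩ := dvd_iff_isRoot.mpr hx
  have hroot : f.IsRoot x := dvd_iff_isRoot.mp ((dvd_iff_isRoot.mpr hx).trans hef)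
  refine ⟨x, hroot, EuclideanDomain.gcdA f g * e', EuclideanDomain.gcdB f g * e',
    mul_left_cancel₀ (X_sub_C_ne_zero x) ?_⟩
  rw [mul_divByMonic_eq_iff_isRoot.mpr hroot]
  linear_combination he + (EuclideanDomain.gcd f g) * he' +
    (X - C x) * e' * EuclideanDomain.gcd_eq_gcd_ab f g

/-- The index `[R : ℤ[θ]]` of additive groups, with value `0` when it is infinite. -/
noncomputable def adjoinIndex {R : Type*} [CommRing R] (θ : R) : ℕ :=
  (Algebra.adjoin ℤ {θ}).toSubring.toAddSubgroup.index

namespace adjoinIndex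

variable {R : Type*} [CommRing R] {θ : R}

theorem nsmul_mem (x : R) : adjoinIndex θ • x ∈ Algebra.adjoin ℤ {θ} :=
  (Algebra.adjoin ℤ {θ}).toSubring.toAddSubgroup.nsmul_index_mem x

theorem exists_degree_lt_aeval_eq (hθ : IsIntegral ℤ θ) {x : R}
    (hx : x ∈ Algebra.adjoin ℤ {θ}) :
    ∃ g : ℤ[X], g.degree < (minpoly ℤ θ).degree ∧ aeval θ g = x := by
  obtain ⟨g, rfl⟩ := Algebra.adjoin_singleton_eq_range_aeval ℤ θ ▸ hx
  exact ⟨g %ₘ minpoly ℤ θ, degree_modByMonic_lt _ (minpoly.monic hθ),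
    aeval_modByMonic_eq_self_of_root (minpoly.aeval ℤ θ)⟩

variable [IsDomain R] [CharZero R]

theorem dvd_of_dvd_aeval (hθ : IsIntegral ℤ θ) {g : ℤ[X]} (hg : g.Monic)
    (hdeg : g.degree < (minpoly ℤ θ).degree) {m : ℤ} (hm : (m : R) ∣ aeval θ g) :
    m ∣ adjoinIndex θ := by
  obtain ⟨x, hx⟩ := hm
  obtain ⟨h, hh, hhx⟩ := exists_degree_lt_aeval_eq hθ (nsmul_mem (θ := θ) x)
  have hdvd : minpoly ℤ θ ∣ (adjoinIndex θ : ℤ) • g - m • h := by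
    refine minpoly.isIntegrallyClosed_dvd hθ ?_
    rw [map_sub, map_zsmul, map_zsmul, hx, hhx, zsmul_eq_mul, zsmul_eq_mul, nsmul_eq_mul,
      Int.cast_natCast]
    ring
  have hzero := eq_zero_of_dvd_of_degree_lt hdvd <| (degree_sub_le _ _).trans_lt <|
    max_lt ((degree_smul_le _ _).trans_lt hdeg) ((degree_smul_le _ _).trans_lt hh)
  refine ⟨h.coeff g.natDegree, ?_⟩
  simpa [hg.coeff_natDegree, sub_eq_zero] using congrArg (coeff · g.natDegree) hzero

theorem dvd_of_sq_dvd_eval [IsIntegrallyClosed R] (hθ : IsIntegral ℤ θ) {m c : ℤ}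
    (h : m ^ 2 ∣ (minpoly ℤ θ).eval c) (h' : m ∣ (minpoly ℤ θ).derivative.eval c) :
    m ∣ adjoinIndex θ := by
  have hdeg : (X - C c).degree ≤ (minpoly ℤ θ).degree := by
    rw [degree_X_sub_C]
    exact Nat.WithBot.one_le_iff_zero_lt.mpr (minpoly.degree_pos hθ)
  refine dvd_of_dvd_aeval hθ ?_ ?_ (dvd_aeval_divByMonic_X_sub_C (minpoly.aeval ℤ θ) h h')
  · rw [Monic, leadingCoeff_divByMonic_of_monic (monic_X_sub_C c) hdeg, minpoly.monic hθ]
  · exact degree_divByMonic_lt _ _ (minpoly.ne_zero hθ) (degree_X_sub_C c ▸ zero_lt_one)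

theorem mem_adjoin_of_prime_mul_mem (hθ : IsIntegral ℤ θ) {p : ℕ} [Fact p.Prime]
    (hsplits : ((minpoly ℤ θ).map (Int.castRingHom (ZMod p))).Splits)
    (hroots : ∀ x, ((minpoly ℤ θ).map (Int.castRingHom (ZMod p))).IsRoot x →
      ∃ a : ℤ, (a : ZMod p) = x ∧ ¬ (p : R) ∣ aeval θ (minpoly ℤ θ /ₘ (X - C a)))
    {y : R} (hy : p * y ∈ Algebra.adjoin ℤ {θ}) : y ∈ Algebra.adjoin ℤ {θ} := by
  obtain ⟨r, hr⟩ := Algebra.adjoin_singleton_eq_range_aeval ℤ θ ▸ hy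
  have hsurj := Polynomial.map_surjective (Int.castRingHom (ZMod p)) (ZMod.ringHom_surjective _)
  set s := minpoly ℤ θ
  have hsθ : aeval θ s = 0 := minpoly.aeval ℤ θ
  have hsmon : s.Monic := minpoly.monic hθ
  by_cases hdvd : s.map (Int.castRingHom (ZMod p)) ∣ r.map (Int.castRingHom (ZMod p))
  · obtain ⟨q', hq⟩ := hdvd
    obtain ⟨q, rfl⟩ := hsurj q'
    obtain ⟨w, rfl⟩ := exists_eq_add_C_mul_of_map_eq (g := s * q) (by rw [hq, Polynomial.map_mul])
    have hp0 : (p : R) ≠ 0 := Nat.cast_ne_zero.mpr (Fact.out : p.Prime).ne_zero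
    have hyw : y = aeval θ w := mul_left_cancel₀ hp0 (by simpa [hsθ] using hr.symm)
    exact hyw ▸ aeval_mem_adjoin_singleton ℤ θ
  · obtain ⟨x, hx, u', v', huv⟩ :=
      exists_isRoot_divByMonic_eq_of_not_dvd hsplits (hsmon.map _).ne_zero hdvd
    obtain ⟨a, rfl, ha⟩ := hroots x hx
    obtain ⟨u, rfl⟩ := hsurj u'
    obtain ⟨v, rfl⟩ := hsurj v'
    obtain ⟨w, hw⟩ := exists_eq_add_C_mul_of_map_eq (p := p) (f := s /ₘ (X - C a))
      (g := u * s + v * r) (by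
        rw [map_divByMonic _ (monic_X_sub_C a)]; simpa using huv)
    refine absurd ⟨aeval θ v * y + aeval θ w, ?_⟩ ha
    have hr' : aeval θ r = p * y := hr
    rw [hw]
    simp only [map_add, map_mul, hsθ, hr', map_natCast]
    ring

theorem not_prime_dvd (hθ : IsIntegral ℤ θ) (hfin : adjoinIndex θ ≠ 0) {p : ℕ} [Fact p.Prime]
    (hsplits : ((minpoly ℤ θ).map (Int.castRingHom (ZMod p))).Splits)
    (hroots : ∀ x, ((minpoly ℤ θ).map (Int.castRingHom (ZMod p))).IsRoot x →
      ∃ a : ℤ, (a : ZMod p) = x ∧ ¬ (p : R) ∣ aeval θ (minpoly ℤ θ /ₘ (X - C a))) :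
    ¬ p ∣ adjoinIndex θ := by
  intro hp
  let Q := R ⧸ (Algebra.adjoin ℤ {θ}).toSubring.toAddSubgroup
  have : (Algebra.adjoin ℤ {θ}).toSubring.toAddSubgroup.FiniteIndex := ⟨hfin⟩
  obtain ⟨q, hq⟩ := exists_prime_addOrderOf_dvd_card' (G := Q) p hp
  obtain ⟨y, rfl⟩ := QuotientAddGroup.mk_surjective q
  have hpy : p * y ∈ Algebra.adjoin ℤ {θ} := by
    have := hq ▸ addOrderOf_nsmul_eq_zero (y : Q)
    rw [← nsmul_eq_mul]
    exact (QuotientAddGroup.eq_zero_iff _).mp this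
  have hy : (y : Q) = 0 := (QuotientAddGroup.eq_zero_iff y).mpr <|
    mem_adjoin_of_prime_mul_mem hθ hsplits hroots hpy
  rw [hy, addOrderOf_zero] at hq
  exact (Fact.out : p.Prime).ne_one hq.symm

end adjoinIndex

section Norm

variable {F L : Type*} [Field F] [Field L] [Algebra F L]

theorem norm_algebraMap_sub_gen (pb : PowerBasis F L) (a : F) :
    Algebra.norm F (algebraMap F L a - pb.gen) = (minpoly F pb.gen).eval a := by
  classical
  rw [Algebra.norm_eq_matrix_det pb.basis, ← charpoly_leftMulMatrix, Matrix.eval_charpoly, map_sub,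
    AlgHom.commutes]
  rfl

theorem norm_aeval_gen [Algebra.IsSeparable F L] (pb : PowerBasis F L) (g : F[X]) {n : ℕ}
    (hg : g.natDegree ≤ n) :
    Algebra.norm F (aeval pb.gen g) =
      resultant (minpoly F pb.gen) g (minpoly F pb.gen).natDegree n := by
  classical
  have := pb.finite
  let E := AlgebraicClosure L
  have hmonic := minpoly.monic pb.isIntegral_gen
  have hnodup : ((minpoly F pb.gen).aroots E).Nodup :=
    nodup_roots (Separable.map (Algebra.IsSeparable.isSeparable F pb.gen))
  apply (algebraMap F E).injective
  rw [Algebra.norm_eq_prod_embeddings F E, ← resultant_map_map,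
    ← natDegree_map (algebraMap F E) (p := minpoly F pb.gen),
    resultant_eq_prod_eval _ _ _ (natDegree_map_le.trans hg) (IsAlgClosed.splits _),
    (hmonic.map _).leadingCoeff, one_pow, one_mul]
  rw [Fintype.prod_equiv (pb.liftEquiv' (S := L) (A := F) (B := E))
    (fun σ => σ (aeval pb.gen g)) (fun x => eval (x : E) (g.map (algebraMap F E)))]
  · rw [Finset.prod_mem_multiset _ _
      (fun x => eval (x : E) (g.map (algebraMap F E))) (fun _ => rfl),
      Finset.prod_eq_multiset_prod, Multiset.toFinset_val, Multiset.dedup_eq_self.mpr hnodup]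
  · intro σ
    rw [PowerBasis.liftEquiv'_apply_coe, ← aeval_algHom_apply, eval_map_algebraMap]

theorem algebraDiscr_basis_eq_discr_minpoly [Algebra.IsSeparable F L] (pb : PowerBasis F L) :
    Algebra.discr F pb.basis = (minpoly F pb.gen).discr := by
  have := pb.finite
  have hmonic := minpoly.monic pb.isIntegral_gen
  rw [Algebra.discr_powerBasis_eq_norm, norm_aeval_gen pb _ (natDegree_derivative_le _),
    resultant_deriv (minpoly.degree_pos pb.isIntegral_gen), hmonic.leadingCoeff, mul_one,
    ← mul_assoc, pb.finrank, ← pb.natDegree_minpoly, ← mul_pow]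
  simp

end Norm

theorem algebraDiscr_basis_addSubgroup {B ι : Type*} [CommRing B] [Fintype ι] [DecidableEq ι]
    (b : Module.Basis ι ℤ B) (N : AddSubgroup B) (bN : Module.Basis ι ℤ N) :
    Algebra.discr ℤ (fun i => (bN i : B)) = N.index ^ 2 * Algebra.discr ℤ b := by
  rw [N.index_eq_natAbs_det b bN, Int.natAbs_sq, Module.Basis.det_apply,
    ← Algebra.discr_of_matrix_vecMul, Module.Basis.toMatrix_map_vecMul]

section NumberField

open NumberField

variable {K : Type*} [Field K] [NumberField K]

theorem intCast_algebraDiscr {ι : Type*} [Fintype ι] [DecidableEq ι] (v : ι → 𝓞 K) :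
    (Algebra.discr ℤ v : ℚ) = Algebra.discr ℚ (fun i => (v i : K)) := by
  rw [Algebra.discr_def, Algebra.discr_def, Int.cast_det]
  congr 1
  ext i j
  simp [Algebra.traceMatrix_apply, Algebra.traceForm_apply, Algebra.coe_trace_int]

variable {θ : 𝓞 K} (pb : PowerBasis ℚ K)

theorem minpoly_gen_eq_map (hθ : pb.gen = θ) :
    minpoly ℚ pb.gen = (minpoly ℤ θ).map (Int.castRingHom ℚ) := by
  rw [hθ, minpoly.isIntegrallyClosed_eq_field_fractions' ℚ (RingOfIntegers.isIntegral_coe θ),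
    RingOfIntegers.minpoly_coe]
  rfl

theorem discr_minpoly_eq_sq_mul_discr (hθ : pb.gen = θ) :
    (minpoly ℚ pb.gen).discr = (adjoinIndex θ : ℚ) ^ 2 * discr K := by
  have hint := RingOfIntegers.isIntegral θ
  have hdim : (minpoly ℤ θ).natDegree = pb.dim := by
    rw [← pb.natDegree_minpoly, minpoly_gen_eq_map pb hθ, (minpoly.monic hint).natDegree_map]
  let bZ : Module.Basis (Fin pb.dim) ℤ (Algebra.adjoin ℤ {θ}).toSubring.toAddSubgroup :=
    (Algebra.adjoin.powerBasis' hint).basis.reindex (finCongr hdim)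
  have hbZ (i : Fin pb.dim) : ((bZ i : 𝓞 K) : K) = pb.basis i := by
    have h : bZ i = (Algebra.adjoin.powerBasis' hint).gen ^ (i : ℕ) := by
      rw [Module.Basis.reindex_apply, PowerBasis.basis_eq_pow]
      rfl
    have h' : (bZ i : 𝓞 K) = θ ^ (i : ℕ) := by
      rw [h, Algebra.adjoin.powerBasis'_gen]
      rfl
    simp [h', hθ]
  have hcard : Module.finrank ℤ (𝓞 K) = pb.dim := by
    rw [RingOfIntegers.rank, pb.finrank]
  let b := Module.finBasisOfFinrankEq ℤ (𝓞 K) hcard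
  rw [← algebraDiscr_basis_eq_discr_minpoly, ← discr_eq_discr K b, ← Int.cast_natCast]
  have := congrArg (Int.cast : ℤ → ℚ) (algebraDiscr_basis_addSubgroup b _ bZ)
  rw [intCast_algebraDiscr, funext hbZ] at this
  exact_mod_cast this

theorem adjoinIndex_ne_zero (hθ : pb.gen = θ) : adjoinIndex θ ≠ 0 := by
  intro h
  have := discr_minpoly_eq_sq_mul_discr pb hθ
  rw [← algebraDiscr_basis_eq_discr_minpoly, h, Nat.cast_zero, zero_pow two_ne_zero,
    zero_mul] at this
  exact Algebra.discr_not_zero_of_basis ℚ pb.basis this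

theorem norm_intCast_sub (hθ : pb.gen = θ) (a : ℤ) :
    Algebra.norm ℤ ((a : 𝓞 K) - θ) = (minpoly ℤ θ).eval a := by
  have h := norm_algebraMap_sub_gen pb a
  rw [minpoly_gen_eq_map pb hθ, eval_intCast_map] at h
  rw [← Int.cast_inj (α := ℚ), Algebra.coe_norm_int]
  simpa [hθ] using h

theorem not_dvd_aeval_divByMonic (hθ : pb.gen = θ) {p : ℕ} [Fact p.Prime] {a : ℤ}
    (h : (p : ℤ) ∣ (minpoly ℤ θ).eval a) (h2 : ¬ (p : ℤ) ^ 2 ∣ (minpoly ℤ θ).eval a) :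
    ¬ (p : 𝓞 K) ∣ aeval θ (minpoly ℤ θ /ₘ (X - C a)) := by
  rintro ⟨β, hβ⟩
  obtain ⟨u, hu⟩ := h
  have hp : Prime (p : ℤ) := Nat.prime_iff_prime_int.mp Fact.out
  have hfactor : (a - θ) * β = u := by
    have := congrArg (aeval θ) (modByMonic_add_div (minpoly ℤ θ) (X - C a))
    rw [modByMonic_X_sub_C_eq_C_eval, hu] at this
    simp only [map_add, map_mul, map_sub, aeval_C, aeval_X, hβ, minpoly.aeval] at this
    simp only [eq_intCast, Int.cast_natCast] at this
    have hp0 : (p : 𝓞 K) ≠ 0 := Nat.cast_ne_zero.mpr (Fact.out : p.Prime).ne_zero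
    refine mul_left_cancel₀ hp0 ?_
    linear_combination -this
  have hnorm := congrArg (Algebra.norm ℤ) hfactor
  rw [map_mul, norm_intCast_sub pb hθ, hu, ← eq_intCast (algebraMap ℤ (𝓞 K)),
    Algebra.norm_algebraMap, mul_assoc] at hnorm
  obtain ⟨v, rfl⟩ := hp.dvd_of_dvd_pow (Dvd.intro _ hnorm)
  exact h2 ⟨v, by rw [hu]; ring⟩

theorem not_dvd_adjoinIndex_of_not_sq_dvd_eval (hθ : pb.gen = θ) {p : ℕ} [Fact p.Prime]
    (hsplits : ((minpoly ℤ θ).map (Int.castRingHom (ZMod p))).Splits)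
    (hroots : ∀ x, ((minpoly ℤ θ).map (Int.castRingHom (ZMod p))).IsRoot x →
      ∃ a : ℤ, (a : ZMod p) = x ∧ ¬ (p : ℤ) ^ 2 ∣ (minpoly ℤ θ).eval a) :
    ¬ p ∣ adjoinIndex θ := by
  refine adjoinIndex.not_prime_dvd (RingOfIntegers.isIntegral θ) (adjoinIndex_ne_zero pb hθ)
    hsplits fun x hx => ?_
  obtain ⟨a, rfl, ha⟩ := hroots x hx
  have hdvd : (p : ℤ) ∣ (minpoly ℤ θ).eval a := by
    rw [← ZMod.intCast_zmod_eq_zero_iff_dvd]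
    simpa using hx
  exact ⟨a, rfl, not_dvd_aeval_divByMonic pb hθ hdvd ha⟩

theorem discr_eq_of_dvd_adjoinIndex (hθ : pb.gen = θ) {D m : ℤ} (hm : m ≠ 0)
    (hD : (minpoly ℚ pb.gen).discr = D * m ^ 2) (hdvd : m ∣ adjoinIndex θ)
    (hprime : ∀ p : ℕ, p.Prime → (p : ℤ) ^ 2 ∣ D → ¬ p ∣ adjoinIndex θ) : discr K = D := by
  obtain ⟨k, hk⟩ := hdvd
  have hkD : D = k ^ 2 * discr K := by
    have h : (adjoinIndex θ : ℤ) ^ 2 * discr K = D * m ^ 2 := by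
      exact_mod_cast (discr_minpoly_eq_sq_mul_discr pb hθ).symm.trans hD
    refine mul_right_cancel₀ (pow_ne_zero 2 hm) ?_
    rw [← h, hk]
    ring
  have hunit : k.natAbs = 1 := by
    refine Nat.eq_one_iff_not_exists_prime_dvd.mpr fun p hp hpk => hprime p hp ?_ ?_
    · exact hkD ▸ (pow_dvd_pow_of_dvd (Int.natCast_dvd.mpr hpk) 2).mul_right _
    · exact Int.natCast_dvd_natCast.mp (hk ▸ (Int.natCast_dvd.mpr hpk).mul_left m)
  rw [hkD, ← Int.natAbs_sq, hunit, Nat.cast_one, one_pow, one_mul]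

end NumberField

section CoefficientLists

variable {R : Type*} [CommRing R]

/-- The polynomial with a given list of coefficients, leading coefficient first. -/
noncomputable def ofCoeffs : List R → R[X]
  | [] => 0
  | a :: l => C a * X ^ l.length + ofCoeffs l

namespace ofCoeffs

theorem degree_lt : ∀ l : List R, (ofCoeffs l).degree < l.length
  | [] => by simp [ofCoeffs]
  | a :: l => by
    have hl : (l.length : WithBot ℕ) < (a :: l).length := by
      exact_mod_cast Nat.lt_succ_self l.length
    exact (degree_add_le _ _).trans_lt <|
      max_lt ((degree_C_mul_X_pow_le _ _).trans_lt hl) ((degree_lt l).trans hl)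

theorem natDegree_cons_le (a : R) (l : List R) : (ofCoeffs (a :: l)).natDegree ≤ l.length :=
  natDegree_add_le_of_degree_le (natDegree_C_mul_X_pow_le _ _)
    (natDegree_le_of_degree_le (degree_lt l).le)

theorem coeff_cons_length (a : R) (l : List R) : (ofCoeffs (a :: l)).coeff l.length = a := by
  simp [ofCoeffs, coeff_eq_zero_of_degree_lt (degree_lt l)]

theorem monic_one_cons (l : List R) : (ofCoeffs (1 :: l)).Monic :=
  monic_of_natDegree_le_of_coeff_eq_one l.length (natDegree_cons_le 1 l) (coeff_cons_length 1 l)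

theorem map_eq {R' : Type*} [CommRing R'] (φ : R →+* R') :
    ∀ l : List R, (ofCoeffs l).map φ = ofCoeffs (l.map φ)
  | [] => by simp [ofCoeffs]
  | a :: l => by simp [ofCoeffs, map_eq φ l]

end ofCoeffs

/-- Evaluation at `c` of the polynomial with a given list of coefficients. -/
def evalCoeffs (c : R) : List R → R
  | [] => 0
  | a :: l => a * c ^ l.length + evalCoeffs c l

theorem eval_ofCoeffs (c : R) : ∀ l : List R, (ofCoeffs l).eval c = evalCoeffs c l
  | [] => by simp [ofCoeffs, evalCoeffs]
  | a :: l => by simp [ofCoeffs, evalCoeffs, eval_ofCoeffs c l]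

/-- The coefficient list of the derivative. -/
def derivCoeffs : List R → List R
  | [] => []
  | [_] => []
  | a :: b :: l => a * (b :: l).length :: derivCoeffs (b :: l)

theorem length_derivCoeffs : ∀ l : List R, (derivCoeffs l).length = l.length - 1
  | [] => rfl
  | [_] => rfl
  | _ :: b :: l => by simp [derivCoeffs, length_derivCoeffs (b :: l)]

theorem derivative_ofCoeffs :
    ∀ l : List R, derivative (ofCoeffs l) = ofCoeffs (derivCoeffs l)
  | [] => by simp [ofCoeffs, derivCoeffs]
  | [_] => by simp [ofCoeffs, derivCoeffs]
  | a :: b :: l => by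
    rw [ofCoeffs, derivCoeffs, derivative_add, derivative_ofCoeffs (b :: l),
      derivative_C_mul_X_pow, ofCoeffs, length_derivCoeffs]

/-- The coefficients of `f - q X ^ (m - n) g` below the leading one, where `A` and `B` list the
coefficients of `f` and `g` below their leading ones and `m`, `n` are the lengths. -/
def eliminateLead (q : R) : List R → List R → List R
  | a :: A, b :: B => (a - q * b) :: eliminateLead q A B
  | A, _ => A

@[simp]
theorem length_eliminateLead (q : R) : ∀ A B, (eliminateLead q A B).length = A.length
  | [], _ => by simp [eliminateLead]
  | _ :: _, [] => by simp [eliminateLead]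
  | _ :: A, _ :: B => by simp [eliminateLead, length_eliminateLead q A B]

theorem ofCoeffs_eliminateLead (q : R) : ∀ A B : List R, B.length ≤ A.length →
    ofCoeffs (eliminateLead q A B) =
      ofCoeffs A - C q * X ^ (A.length - B.length) * ofCoeffs B
  | [], [], _ => by simp [eliminateLead, ofCoeffs]
  | _ :: _, [], _ => by simp [eliminateLead, ofCoeffs]
  | a :: A, b :: B, h => by
    have hBA : B.length ≤ A.length := by simpa using h
    have hX : (X ^ A.length : R[X]) = X ^ (A.length - B.length) * X ^ B.length := by
      rw [← pow_add, Nat.sub_add_cancel hBA]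
    simp only [eliminateLead, ofCoeffs, ofCoeffs_eliminateLead q A B hBA, length_eliminateLead,
      C_sub, C_mul, List.length_cons, Nat.add_sub_add_right, hX]
    ring

end CoefficientLists

section Resultant

variable {F : Type*} [Field F]

theorem resultant_ofCoeffs_eliminateLead {a b : F} {A B : List F} (hb : b ≠ 0)
    (hA : A ≠ []) (hBA : B.length ≤ A.length) :
    resultant (ofCoeffs (a :: A)) (ofCoeffs (b :: B)) A.length B.length =
      (-1) ^ B.length * b *
        resultant (ofCoeffs (eliminateLead (a / b) A B)) (ofCoeffs (b :: B))
          (A.length - 1) B.length := by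
  have hsplit : ofCoeffs (a :: A) = ofCoeffs (eliminateLead (a / b) A B) +
      ofCoeffs (b :: B) * (C (a / b) * X ^ (A.length - B.length)) := by
    have hX : (X ^ A.length : F[X]) = X ^ (A.length - B.length) * X ^ B.length := by
      rw [← pow_add, Nat.sub_add_cancel hBA]
    have hC : (C a : F[X]) = C (a / b) * C b := by rw [← C_mul, div_mul_cancel₀ a hb]
    rw [ofCoeffs_eliminateLead _ _ _ hBA, ofCoeffs, ofCoeffs, hX, hC]
    ring
  have hdeg : (ofCoeffs (eliminateLead (a / b) A B)).natDegree ≤ A.length - 1 := by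
    obtain ⟨c, l, hcl⟩ := List.exists_cons_of_length_pos (l := eliminateLead (a / b) A B)
      (by rw [length_eliminateLead]; exact List.length_pos_of_ne_nil hA)
    have hl : l.length = A.length - 1 := by
      rw [← length_eliminateLead (a / b) A B, hcl, List.length_cons, Nat.add_sub_cancel]
    exact hcl ▸ hl ▸ ofCoeffs.natDegree_cons_le c l
  have hq : (C (a / b) * X ^ (A.length - B.length)).natDegree + B.length ≤ A.length := by
    have := natDegree_C_mul_X_pow_le (a / b) (A.length - B.length)
    omega
  have hlen : A.length = A.length - 1 + 1 :=
    (Nat.sub_add_cancel (List.length_pos_of_ne_nil hA)).symm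
  rw [hsplit, resultant_add_mul_left _ _ _ _ _ hq (ofCoeffs.natDegree_cons_le b B), hlen,
    resultant_succ_left_deg _ _ _ _ hdeg, ofCoeffs.coeff_cons_length, Nat.add_sub_cancel]

variable [DecidableEq F]

/-- The resultant of the polynomials with given nonempty coefficient lists, whose formal degrees
are one less than the lengths, computed by the Euclidean algorithm. -/
def listResultant : List F → List F → F
  | a :: A, b :: B =>
    if B.length = 0 then b ^ A.length
    else if A.length < B.length then
      (-1) ^ (A.length * B.length) * listResultant (b :: B) (a :: A)
    else if b = 0 then a * listResultant (a :: A) B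
    else (-1) ^ B.length * b * listResultant (eliminateLead (a / b) A B) (b :: B)
  | _, _ => 0
termination_by A B => 2 * (A.length + B.length) + if A.length < B.length then 1 else 0
decreasing_by all_goals (simp only [List.length_cons, length_eliminateLead]; split_ifs <;> omega)

theorem listResultant_eq (A B : List F) (hA : A ≠ []) (hB : B ≠ []) : listResultant A B =
    resultant (ofCoeffs A) (ofCoeffs B) (A.length - 1) (B.length - 1) := by
  induction A, B using listResultant.induct with
  | case1 a A b B hn =>
    obtain rfl := List.eq_nil_of_length_eq_zero hn
    simp [listResultant, ofCoeffs]
  | case2 a A b B hn hlt ih =>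
    rw [listResultant, if_neg hn, if_pos hlt, ih hB hA, resultant_comm (ofCoeffs (a :: A))]
    rfl
  | case3 a A B hn hlt ih =>
    have hzero : ofCoeffs (0 :: B) = ofCoeffs B := by simp [ofCoeffs]
    obtain ⟨b, B, rfl⟩ := List.exists_cons_of_ne_nil (mt List.length_eq_zero_iff.mpr hn)
    rw [listResultant, if_neg hn, if_neg hlt, if_pos rfl, ih hA (List.cons_ne_nil b B), hzero]
    simp only [List.length_cons, Nat.add_sub_cancel]
    rw [resultant_add_right_deg _ _ _ _ 1 (ofCoeffs.natDegree_cons_le b B),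
      ofCoeffs.coeff_cons_length, pow_one]
  | case4 a A b B hn hlt hb ih =>
    have hA' : A ≠ [] := by
      rintro rfl
      exact hn (Nat.le_zero.mp (not_lt.mp hlt))
    have hE : eliminateLead (a / b) A B ≠ [] := by
      rwa [← List.length_pos_iff, length_eliminateLead, List.length_pos_iff]
    rw [listResultant, if_neg hn, if_neg hlt, if_neg hb, ih hE hB, length_eliminateLead]
    exact (resultant_ofCoeffs_eliminateLead hb hA' (not_lt.mp hlt)).symm
  | case5 A B h =>
    obtain ⟨a, A, rfl⟩ := List.exists_cons_of_ne_nil hA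
    obtain ⟨b, B, rfl⟩ := List.exists_cons_of_ne_nil hB
    exact (h a A b B rfl rfl).elim

end Resultant

section PolynomialS

/-- The coefficients of `S`, leading coefficient first. -/
def coeffsS : List ℤ :=
  [1, -3, -124, 651, 5797, -44020, -46593, 1523309, -4960682, -28562129, 205283395, 345367838,
   -3865963779, -5281917640, 35629245810, 95827452774, 227525150938, -1735983387875,
   -9952753525850, 15867354189588, 146446287180279, -99789981007214, -1135328992145553,
   -171825071648506, 7446294546204081, 294530833190147, -24397472702475140, -9976638213111902,
   61714590456038129, 16902762581347117, -13833080015551423, -202960986205176103,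
   187532019539254309]

/-- The positive square root of `disc S / (-31 ^ 51)`, which is the index of `ℤ[x] / (S)` in the
maximal order. -/
def indexS : ℤ :=
  318379091775774855383606292115888147994762024635470894507 * 10 ^ 234 +
  614732445895321068654633302732338390390669876373914064211806806203132356872044 * 10 ^ 156 +
  655011447106485541710542783703212156385577766917380788584195794249809355876064 * 10 ^ 78 +
  531020921854300225720302028237525909563890160219689255206486087125934143311183

/-- An integer at which `S` vanishes modulo `indexS ^ 2` and `S'` vanishes modulo `indexS`. -/
def doubleRootS : ℤ :=
  -(25057442487129000517500137456082762376168575417280925321 * 10 ^ 234 +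
    437017511133765884315100551449327179081998435387373245161586274359936513485669 * 10 ^ 156 +
    563734539686863298686339093669665827743172140802151470672860058559327963774397 * 10 ^ 78 +
    195844375185942234842748633678499578160682038963409507465184287006914435837645)

theorem S_eq_map_ofCoeffs : S = (ofCoeffs coeffsS).map (Int.castRingHom ℚ) := by
  simp only [S, coeffsS, ofCoeffs, eq_intCast, Int.cast_one, List.length_cons, List.length_nil,
    zero_add, Nat.reduceAdd, one_mul, Int.cast_neg, Int.cast_ofNat, Int.reduceNeg, neg_mul,
    pow_one, pow_zero, mul_one, add_zero, Polynomial.map_add, Polynomial.map_pow, map_X,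
    Polynomial.map_neg, Polynomial.map_mul, Polynomial.map_ofNat]
  ring

theorem monic_ofCoeffs_coeffsS : (ofCoeffs coeffsS).Monic :=
  ofCoeffs.monic_one_cons _

theorem monic_S : S.Monic :=
  S_eq_map_ofCoeffs ▸ monic_ofCoeffs_coeffsS.map _

theorem natDegree_S : S.natDegree = 32 := by
  rw [S]
  compute_degree!

set_option maxRecDepth 100000 in
theorem listResultant_coeffsS :
    listResultant (coeffsS.map (Int.castRingHom ℚ))
      (derivCoeffs (coeffsS.map (Int.castRingHom ℚ))) = -31 ^ 51 * indexS ^ 2 := by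
  decide +kernel

theorem polynomialDiscr_S : S.discr = -31 ^ 51 * indexS ^ 2 := by
  have hS : S = ofCoeffs (coeffsS.map (Int.castRingHom ℚ)) := by
    rw [S_eq_map_ofCoeffs, ofCoeffs.map_eq]
  have hres : resultant S (derivative S) 32 31 = -31 ^ 51 * indexS ^ 2 := by
    rw [← listResultant_coeffsS, listResultant_eq, ← derivative_ofCoeffs, ← hS]
    · rfl
    · exact List.cons_ne_nil _ _
    · exact List.cons_ne_nil _ _
  have hdeg : 0 < S.degree := natDegree_pos_iff_degree_pos.mp (by rw [natDegree_S]; norm_num)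
  have hdiscr : resultant S (derivative S) 32 31 = S.discr := by
    have h := resultant_deriv hdeg
    simp only [natDegree_S, monic_S.leadingCoeff] at h
    norm_num at h
    exact h
  exact hdiscr.symm.trans hres

theorem sq_indexS_dvd_eval : indexS ^ 2 ∣ (ofCoeffs coeffsS).eval doubleRootS := by
  rw [eval_ofCoeffs]
  decide +kernel

theorem indexS_dvd_eval_derivative :
    indexS ∣ (derivative (ofCoeffs coeffsS)).eval doubleRootS := by
  rw [derivative_ofCoeffs, eval_ofCoeffs]
  decide +kernel

theorem map_ofCoeffs_coeffsS_zmod :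
    (ofCoeffs coeffsS).map (Int.castRingHom (ZMod 31)) = (X - C 8) ^ 31 * (X - C 3) := by
  have hcoeffs : coeffsS.map (Int.castRingHom (ZMod 31)) =
      1 :: -3 :: (List.replicate 29 0 ++ [-8, 24]) := by decide +kernel
  have hconst : (C 24 : (ZMod 31)[X]) = C 3 * C 8 := by rw [← C_mul]; norm_num
  have : Fact (Nat.Prime 31) := ⟨by norm_num⟩
  rw [ofCoeffs.map_eq, hcoeffs, sub_pow_char, ← C_pow, ZMod.pow_card]
  simp only [ofCoeffs, List.replicate, List.cons_append, List.nil_append, List.length_cons,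
    List.length_nil, hconst, map_zero, map_neg, map_one]
  ring

theorem exists_not_sq_dvd_eval_of_isRoot_zmod (x : ZMod 31)
    (hx : ((ofCoeffs coeffsS).map (Int.castRingHom (ZMod 31))).IsRoot x) :
    ∃ a : ℤ, (a : ZMod 31) = x ∧ ¬ ((31 : ℕ) : ℤ) ^ 2 ∣ (ofCoeffs coeffsS).eval a := by
  have : Fact (Nat.Prime 31) := ⟨by norm_num⟩
  rw [map_ofCoeffs_coeffsS_zmod, IsRoot, eval_mul, eval_pow, eval_sub, eval_sub, eval_X, eval_C,
    eval_C, mul_eq_zero, pow_eq_zero_iff (by norm_num), sub_eq_zero, sub_eq_zero] at hx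
  rcases hx with rfl | rfl
  · exact ⟨8, by norm_num, by rw [eval_ofCoeffs]; decide +kernel⟩
  · exact ⟨3, by norm_num, by rw [eval_ofCoeffs]; decide +kernel⟩

theorem discr_eq_of_minpoly_gen_eq_S {K : Type*} [Field K] [NumberField K] (pb : PowerBasis ℚ K)
    (h : minpoly ℚ pb.gen = S) : NumberField.discr K = -31 ^ 51 := by
  have hint : IsIntegral ℤ pb.gen := by
    refine ⟨ofCoeffs coeffsS, monic_ofCoeffs_coeffsS, ?_⟩
    have := minpoly.aeval ℚ pb.gen
    rwa [h, S_eq_map_ofCoeffs, ← algebraMap_int_eq, aeval_map_algebraMap] at this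
  let θ : NumberField.RingOfIntegers K := ⟨pb.gen, hint⟩
  have hmin : minpoly ℤ θ = ofCoeffs coeffsS := by
    apply map_injective (Int.castRingHom ℚ) Int.cast_injective
    rw [← minpoly_gen_eq_map pb (θ := θ) rfl, h, S_eq_map_ofCoeffs]
  have hθ := NumberField.RingOfIntegers.isIntegral θ
  refine discr_eq_of_dvd_adjoinIndex pb (θ := θ) rfl (m := indexS) (by decide +kernel)
    (by rw [h, polynomialDiscr_S]; norm_cast) ?_ fun p hp hpD => ?_
  · apply adjoinIndex.dvd_of_sq_dvd_eval hθ (c := doubleRootS)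
    · exact hmin ▸ sq_indexS_dvd_eval
    · exact hmin ▸ indexS_dvd_eval_derivative
  · obtain rfl : p = 31 := by
      have hp31 : p ∣ 31 ^ 51 := by
        have := (dvd_pow_self (p : ℤ) two_ne_zero).trans (dvd_neg.mp hpD)
        exact_mod_cast this
      exact (Nat.prime_dvd_prime_iff_eq hp (by norm_num)).mp (hp.dvd_of_dvd_pow hp31)
    have : Fact (Nat.Prime 31) := ⟨hp⟩
    refine not_dvd_adjoinIndex_of_not_sq_dvd_eval pb (θ := θ) rfl ?_ ?_
    · rw [hmin, map_ofCoeffs_coeffsS_zmod]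
      exact ((Splits.X_sub_C 8).pow 31).mul (Splits.X_sub_C 3)
    · exact hmin ▸ exists_not_sq_dvd_eval_of_isRoot_zmod

end PolynomialS

theorem discr_S (hS : Irreducible S) :
    haveI : Fact (Irreducible S) := ⟨hS⟩
    haveI : CharZero (AdjoinRoot S) :=
      charZero_of_injective_algebraMap (algebraMap ℚ (AdjoinRoot S)).injective
    haveI : FiniteDimensional ℚ (AdjoinRoot S) :=
      (AdjoinRoot.powerBasis hS.ne_zero).finite
    haveI : NumberField (AdjoinRoot S) := ⟨⟩
    NumberField.discr (AdjoinRoot S) = -31 ^ 51 := by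
  let : Fact (Irreducible S) := ⟨hS⟩
  let : CharZero (AdjoinRoot S) :=
    charZero_of_injective_algebraMap (algebraMap ℚ (AdjoinRoot S)).injective
  let : FiniteDimensional ℚ (AdjoinRoot S) := (AdjoinRoot.powerBasis hS.ne_zero).finite
  let : NumberField (AdjoinRoot S) := ⟨⟩
  have hmin := AdjoinRoot.minpoly_root hS.ne_zero
  rw [monic_S.leadingCoeff, inv_one, C_1, mul_one] at hmin
  refine discr_eq_of_minpoly_gen_eq_S (AdjoinRoot.powerBasis hS.ne_zero) ?_
  rw [AdjoinRoot.powerBasis_gen]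
  exact hmin
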